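/- For every integer k ≥ 1, the functions φ_k and φ_{k+1} − z n_k /(2(k+1)ρ) are independent of all n_ℓ with ℓ ≥ k; that is, if two refraction indices n, ñ satisfy n_m = ñ_m on Γ for all 0 ≤ m ≤ k−1, then the corresponding phase coefficients satisfy φ_k = φ̃'_k and φ_{k+1} − z n_k/(2(k+1)ρ) = φ̃'_{k+1} − z ñ_k/(2(k+1)ρ), where φ̃'_m denote the phase coefficients built from ñ. -/

import Mathlib

/- Setting: near the boundary we use normal coordinates (x₁, x'), with x' ranging in a
chart of Γ modelled by ℝ^n (n = d−1).  The data are the Taylor coefficients `R_ℓ` of the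
metric matrix `R(x)`, the Taylor coefficients `n_k = (k!)^{−1}∂_ν^k n|_Γ` of the
refraction index, and `ρ = √(−r₀ + z n₀)`, `Im ρ > 0`.  The phase coefficients `φ_k`
are determined by `φ₀ = −⟨x',ξ'⟩`, `φ₁ = ρ` and the eikonal recursion (3.12). -/

noncomputable section

/-- Square root with nonnegative imaginary part. -/
def ssqrt (w : ℂ) : ℂ :=
  if 0 ≤ (w ^ (1 / 2 : ℂ)).im then w ^ (1 / 2 : ℂ) else -(w ^ (1 / 2 : ℂ))

/-- `z ∈ Z₁ ∪ Z₂ ∪ Z₃`. -/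
def Zall (z : ℂ) : Prop :=
  (z.re = 1 ∧ 0 < |z.im| ∧ |z.im| ≤ 1) ∨ (z.re = -1 ∧ |z.im| ≤ 1) ∨
    (|z.re| ≤ 1 ∧ |z.im| = 1)

variable (n : ℕ)

/-- The `i`-th coordinate vector of `ℝ^n`. -/
def ev (i : Fin n) : EuclideanSpace ℝ (Fin n) := EuclideanSpace.single i (1 : ℝ)

/-- Derivative of a symbol in the base (`x'`) direction `v`. -/
def Dx (f : (EuclideanSpace ℝ (Fin n)) × (EuclideanSpace ℝ (Fin n)) → ℂ)
    (p : (EuclideanSpace ℝ (Fin n)) × (EuclideanSpace ℝ (Fin n)))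
    (v : EuclideanSpace ℝ (Fin n)) : ℂ :=
  fderiv ℝ f p (v, 0)

/-- `⟨R_ℓ ∇_{x'} f, ∇_{x'} g⟩ = ∑_{a,b} (R_ℓ)_{ab} ∂_a f ∂_b g`. -/
def RPair (Rℓ : EuclideanSpace ℝ (Fin n) → (EuclideanSpace ℝ (Fin n) →L[ℝ] EuclideanSpace ℝ (Fin n)))
    (f g : (EuclideanSpace ℝ (Fin n)) × (EuclideanSpace ℝ (Fin n)) → ℂ)
    (p : (EuclideanSpace ℝ (Fin n)) × (EuclideanSpace ℝ (Fin n))) : ℂ :=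
  ∑ a : Fin n, ∑ b : Fin n,
    ((inner ℝ (Rℓ p.1 (ev n a)) (ev n b) : ℝ) : ℂ) * Dx n f p (ev n a) * Dx n g p (ev n b)

/-- The eikonal recursion (3.12):
`∑_{k+j=K} (k+1)(j+1) φ_{k+1} φ_{j+1} + ∑_{k+j+ℓ=K} ⟨R_ℓ ∇_{x'}φ_k, ∇_{x'}φ_j⟩ = z n_K`
for every `K`. -/
def EikonalRec
    (Rk : ℕ → EuclideanSpace ℝ (Fin n) → (EuclideanSpace ℝ (Fin n) →L[ℝ] EuclideanSpace ℝ (Fin n)))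
    (nk : ℕ → EuclideanSpace ℝ (Fin n) → ℝ) (z : ℂ)
    (φ : ℕ → (EuclideanSpace ℝ (Fin n)) × (EuclideanSpace ℝ (Fin n)) → ℂ) : Prop :=
  ∀ K : ℕ, ∀ p,
    (∑ k ∈ Finset.range (K + 1),
      (((k + 1) * (K - k + 1) : ℕ) : ℂ) * φ (k + 1) p * φ (K - k + 1) p) +
    (∑ ℓ ∈ Finset.range (K + 1), ∑ k ∈ Finset.range (K + 1 - ℓ),
      RPair n (Rk ℓ) (φ k) (φ (K - ℓ - k)) p) = z * (nk K p.1 : ℂ)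

/-- `ρ = √(−⟨R₀(x')ξ',ξ'⟩ + z n₀(x'))`, branch with `Im ρ > 0`. -/
def rho
    (R₀ : EuclideanSpace ℝ (Fin n) → (EuclideanSpace ℝ (Fin n) →L[ℝ] EuclideanSpace ℝ (Fin n)))
    (n₀ : EuclideanSpace ℝ (Fin n) → ℝ) (z : ℂ)
    (p : (EuclideanSpace ℝ (Fin n)) × (EuclideanSpace ℝ (Fin n))) : ℂ :=
  ssqrt (-((inner ℝ (R₀ p.1 p.2) p.2 : ℝ) : ℂ) + z * (n₀ p.1 : ℂ))

/-! Comparing the recursions of `φ` and `φ'` at level `k ≥ 1`, all terms cancel except the two end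
terms of the quadratic sum, which leave `2 (k + 1) φ₁ (φ_{k+1} − φ'_{k+1}) = z n_k − z n'_k`.
While `n_k = n'_k` this propagates `φ = φ'` one step, because `φ₁ = ρ` does not vanish; the first
level at which the refraction indices may differ gives the second identity. The gradient pairings
only enter through cancellation, so they may be arbitrary operators. -/

section QuadraticRec

open Finset

theorem sum_antidiagonal_mul_self_sub {R : Type*} [CommRing R] {a b : ℕ → R} {K : ℕ} (hK : 0 < K)
    (hab : ∀ m < K, a m = b m) :
    ∑ ij ∈ antidiagonal K, a ij.1 * a ij.2 - ∑ ij ∈ antidiagonal K, b ij.1 * b ij.2 =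
      2 * a 0 * (a K - b K) := by
  obtain ⟨K, rfl⟩ := Nat.exists_eq_add_one.mpr hK
  cases K with
  | zero =>
    simp only [Nat.sum_antidiagonal_succ, HasAntidiagonal.antidiagonal_zero, sum_singleton,
      hab 0 hK]
    ring
  | succ K =>
    have interior_eq : ∑ ij ∈ antidiagonal K, a (ij.1 + 1) * a (ij.2 + 1) =
        ∑ ij ∈ antidiagonal K, b (ij.1 + 1) * b (ij.2 + 1) := by
      refine sum_congr rfl fun ij hij => ?_
      rw [HasAntidiagonal.mem_antidiagonal] at hij
      rw [hab (ij.1 + 1) (by omega), hab (ij.2 + 1) (by omega)]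
    simp only [Nat.sum_antidiagonal_succ (n := K + 1), Nat.sum_antidiagonal_succ' (n := K)]
    rw [interior_eq, hab 0 hK]
    ring

variable {X R : Type*} [CommRing R]

/-- The eikonal recursion (3.12) for functions from a set `X` to a ring, with the pairings
`⟨R_ℓ ∇·, ∇·⟩` replaced by arbitrary, possibly nonlocal, operators `B ℓ` and `z n_K` by `g K`. -/
def QuadraticRec (B : ℕ → (X → R) → (X → R) → X → R) (g φ : ℕ → X → R) : Prop :=
  ∀ K p,
    ∑ kj ∈ antidiagonal K, ((kj.1 + 1) * φ (kj.1 + 1) p) * ((kj.2 + 1) * φ (kj.2 + 1) p) +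
      ∑ ℓm ∈ antidiagonal K, ∑ kj ∈ antidiagonal ℓm.2, B ℓm.1 (φ kj.1) (φ kj.2) p = g K p

namespace QuadraticRec

variable {B : ℕ → (X → R) → (X → R) → X → R} {g g' φ φ' : ℕ → X → R} {k : ℕ}

theorem two_mul_mul_sub_eq (h : QuadraticRec B g φ) (h' : QuadraticRec B g' φ') (hk : 0 < k)
    (hφ : ∀ m ≤ k, φ m = φ' m) (p : X) :
    2 * (k + 1) * φ 1 p * (φ (k + 1) p - φ' (k + 1) p) = g k p - g' k p := by
  have pairing_eq : ∑ ℓm ∈ antidiagonal k, ∑ kj ∈ antidiagonal ℓm.2, B ℓm.1 (φ kj.1) (φ kj.2) p =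
      ∑ ℓm ∈ antidiagonal k, ∑ kj ∈ antidiagonal ℓm.2, B ℓm.1 (φ' kj.1) (φ' kj.2) p := by
    refine sum_congr rfl fun ℓm hℓm => sum_congr rfl fun kj hkj => ?_
    rw [HasAntidiagonal.mem_antidiagonal] at hℓm hkj
    rw [hφ kj.1 (by omega), hφ kj.2 (by omega)]
  have square_sub := sum_antidiagonal_mul_self_sub (a := fun m => (m + 1) * φ (m + 1) p)
    (b := fun m => (m + 1) * φ' (m + 1) p) hk fun m hm => by simp only [hφ (m + 1) hm]
  simp only [Nat.cast_zero, zero_add, one_mul] at square_sub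
  linear_combination h k p - h' k p - square_sub - pairing_eq

theorem eq_of_le [NoZeroDivisors R] [CharZero R] (h : QuadraticRec B g φ)
    (h' : QuadraticRec B g' φ') (h₀ : φ 0 = φ' 0) (h₁ : φ 1 = φ' 1) (hφ₁ : ∀ p, φ 1 p ≠ 0)
    (hg : ∀ m < k, g m = g' m) {m : ℕ} (hm : m ≤ k) : φ m = φ' m := by
  induction m using Nat.strong_induction_on with
  | _ m ih =>
    match m with
    | 0 => exact h₀
    | 1 => exact h₁
    | m + 2 =>
      funext p
      have step := two_mul_mul_sub_eq h h' m.succ_pos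
        (fun i hi => ih i (by omega) (by omega)) p
      rw [hg (m + 1) (by omega), sub_self] at step
      have coeff_ne_zero : 2 * (((m + 1 : ℕ) : R) + 1) * φ 1 p ≠ 0 :=
        mul_ne_zero (mul_ne_zero two_ne_zero (Nat.cast_add_one_ne_zero _)) (hφ₁ p)
      exact sub_eq_zero.mp ((mul_eq_zero.mp step).resolve_left coeff_ne_zero)

end QuadraticRec

theorem statement_10_general {𝕜 : Type*} [Field 𝕜] [CharZero 𝕜]
    (B : ℕ → (X → 𝕜) → (X → 𝕜) → X → 𝕜) (g g' φ φ' : ℕ → X → 𝕜) (k : ℕ) (hk : 1 ≤ k)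
    (hagree : ∀ m < k, g m = g' m) (hφ0 : φ 0 = φ' 0) (hφ1 : φ 1 = φ' 1) (hne : ∀ p, φ 1 p ≠ 0)
    (hrec : QuadraticRec B g φ) (hrec' : QuadraticRec B g' φ') :
    (∀ p, φ k p = φ' k p) ∧
    ∀ p, φ (k + 1) p - g k p / (2 * (k + 1) * φ 1 p) =
      φ' (k + 1) p - g' k p / (2 * (k + 1) * φ 1 p) := by
  have phase_eq : ∀ m ≤ k, φ m = φ' m := fun m hm => hrec.eq_of_le hrec' hφ0 hφ1 hne hagree hm
  refine ⟨congrFun (phase_eq k le_rfl), fun p => ?_⟩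
  have step := hrec.two_mul_mul_sub_eq hrec' hk phase_eq p
  have phase_one_ne_zero := hne p
  have succ_ne_zero : (k : 𝕜) + 1 ≠ 0 := Nat.cast_add_one_ne_zero k
  field_simp
  linear_combination step

end QuadraticRec

section Phase

variable {n}

theorem EikonalRec.quadraticRec
    {Rk : ℕ → EuclideanSpace ℝ (Fin n) → (EuclideanSpace ℝ (Fin n) →L[ℝ] EuclideanSpace ℝ (Fin n))}
    {nk : ℕ → EuclideanSpace ℝ (Fin n) → ℝ} {z : ℂ}
    {φ : ℕ → (EuclideanSpace ℝ (Fin n)) × (EuclideanSpace ℝ (Fin n)) → ℂ}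
    (h : EikonalRec n Rk nk z φ) :
    QuadraticRec (fun ℓ => RPair n (Rk ℓ)) (fun K p => z * nk K p.1) φ := by
  intro K p
  refine Eq.trans ?_ (h K p)
  simp only [Finset.Nat.sum_antidiagonal_eq_sum_range_succ_mk]
  congr 1
  · refine Finset.sum_congr rfl fun k _ => ?_
    push_cast
    ring
  · refine Finset.sum_congr rfl fun ℓ hℓ => ?_
    rw [Nat.sub_add_comm (Finset.mem_range_succ_iff.mp hℓ)]

theorem ssqrt_sq (w : ℂ) : ssqrt w ^ 2 = w := by
  have sqrt_sq : (w ^ (1 / 2 : ℂ)) ^ 2 = w := by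
    rw [one_div]
    exact Complex.cpow_nat_inv_pow w two_ne_zero
  unfold ssqrt
  split_ifs
  · exact sqrt_sq
  · rw [neg_sq, sqrt_sq]

theorem Zall.re_eq_neg_one {z : ℂ} (hz : Zall z) (him : z.im = 0) : z.re = -1 := by
  rcases hz with ⟨-, hpos, -⟩ | ⟨hre, -⟩ | ⟨-, him'⟩
  · simp [him] at hpos
  · exact hre
  · simp [him] at him'

theorem Zall.mul_ofReal_ne_ofReal {z : ℂ} (hz : Zall z) {m r : ℝ} (hm : 0 < m) (hr : 0 ≤ r) :
    z * m ≠ r := by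
  intro h
  have him : z.im * m = 0 := by simpa using congrArg Complex.im h
  have hre : z.re * m = r := by simpa using congrArg Complex.re h
  rw [hz.re_eq_neg_one ((mul_eq_zero.mp him).resolve_right hm.ne')] at hre
  linarith

theorem rho_ne_zero
    {R₀ : EuclideanSpace ℝ (Fin n) → (EuclideanSpace ℝ (Fin n) →L[ℝ] EuclideanSpace ℝ (Fin n))}
    {n₀ : EuclideanSpace ℝ (Fin n) → ℝ} {z : ℂ} (hz : Zall z)
    {p : (EuclideanSpace ℝ (Fin n)) × (EuclideanSpace ℝ (Fin n))}
    (hR₀ : 0 ≤ inner ℝ (R₀ p.1 p.2) p.2) (hn₀ : 0 < n₀ p.1) : rho n R₀ n₀ z p ≠ 0 := by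
  intro h
  have radicand_eq := ssqrt_sq (-((inner ℝ (R₀ p.1 p.2) p.2 : ℝ) : ℂ) + z * (n₀ p.1 : ℂ))
  rw [← rho, h] at radicand_eq
  exact hz.mul_ofReal_ne_ofReal hn₀ hR₀ (by linear_combination -radicand_eq)

end Phase

/-- **Lemma 3.3.** For every integer `k ≥ 1`, the functions `φ_k` and
`φ_{k+1} − z n_k/(2(k+1)ρ)` are independent of all `n_ℓ` with `ℓ ≥ k`: if two
refraction indices have the same boundary Taylor coefficients `n_m` for `m < k`, the
corresponding phase coefficients satisfy `φ_k = φ'_k` and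
`φ_{k+1} − z n_k/(2(k+1)ρ) = φ'_{k+1} − z n'_k/(2(k+1)ρ)`. -/
theorem statement_10 (n : ℕ) (hn : 0 < n)
    (Rk : ℕ → EuclideanSpace ℝ (Fin n) → (EuclideanSpace ℝ (Fin n) →L[ℝ] EuclideanSpace ℝ (Fin n)))
    (hRk : ∀ ℓ, ContDiff ℝ (⊤ : ℕ∞) (Rk ℓ))
    (hR₀ell : ∃ c : ℝ, 0 < c ∧ ∀ x ξ, c * ‖ξ‖ ^ 2 ≤ (inner ℝ (Rk 0 x ξ) ξ : ℝ))
    (z : ℂ) (hz : Zall z)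
    (nk nk' : ℕ → EuclideanSpace ℝ (Fin n) → ℝ)
    (hnk : ∀ m, ContDiff ℝ (⊤ : ℕ∞) (nk m)) (hnk' : ∀ m, ContDiff ℝ (⊤ : ℕ∞) (nk' m))
    (hn₀pos : ∃ c : ℝ, 0 < c ∧ ∀ x, c ≤ nk 0 x)
    (k : ℕ) (hk : 1 ≤ k)
    -- the two refraction indices have the same boundary Taylor coefficients below k
    (hagree : ∀ m < k, nk m = nk' m)
    (φ φ' : ℕ → (EuclideanSpace ℝ (Fin n)) × (EuclideanSpace ℝ (Fin n)) → ℂ)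
    (hφsmooth : ∀ m, ContDiff ℝ (⊤ : ℕ∞) (φ m)) (hφ'smooth : ∀ m, ContDiff ℝ (⊤ : ℕ∞) (φ' m))
    (hφ0 : φ 0 = fun p => -((inner ℝ p.1 p.2 : ℝ) : ℂ))
    (hφ'0 : φ' 0 = fun p => -((inner ℝ p.1 p.2 : ℝ) : ℂ))
    (hφ1 : φ 1 = rho n (Rk 0) (nk 0) z) (hφ'1 : φ' 1 = rho n (Rk 0) (nk' 0) z)
    (hrec : EikonalRec n Rk nk z φ) (hrec' : EikonalRec n Rk nk' z φ') :
    (∀ p, φ k p = φ' k p) ∧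
    ∀ p, φ (k + 1) p - z * (nk k p.1 : ℂ) / (2 * (k + 1) * rho n (Rk 0) (nk 0) z p) =
      φ' (k + 1) p - z * (nk' k p.1 : ℂ) / (2 * (k + 1) * rho n (Rk 0) (nk 0) z p) := by
  obtain ⟨c, hc, hR₀⟩ := hR₀ell
  obtain ⟨c', hc', hn₀⟩ := hn₀pos
  have phase_one_ne_zero (p) : φ 1 p ≠ 0 :=
    hφ1 ▸ rho_ne_zero hz ((by positivity : 0 ≤ c * ‖p.2‖ ^ 2).trans (hR₀ p.1 p.2))
      (hc'.trans_le (hn₀ p.1))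
  rw [← hφ1]
  exact statement_10_general _ _ _ φ φ' k hk (fun m hm => by rw [hagree m hm])
    (hφ0.trans hφ'0.symm) (by rw [hφ1, hφ'1, hagree 0 hk]) phase_one_ne_zero
    hrec.quadraticRec hrec'.quadraticRec

end
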